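/- Let Z and W be measurable spaces, let P_Z be a probability measure on Z, let n ≥ 1, and let Q : Z^n → P(W) be a Markov kernel. Let f : Z^n × W → ℝ be measurable and set ξ = ∫∫ exp(f(D,w)) Q(D)(dw) (P_Z^{⊗n})(dD), assumed finite. Then for every δ ∈ (0,1), with P_Z^{⊗n}-probability at least 1−δ over the draw of D, the following holds simultaneously for every probability measure ρ on W with ρ ≪ Q(D), f(D,·) ρ-integrable, and KL(ρ‖Q(D)) < ∞: ∫ f(D,w) ρ(dw) − KL(ρ‖Q(D)) ≤ log(ξ/δ). -/

import Mathlib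

open MeasureTheory ProbabilityTheory

/-!
For a fixed `D`, the Donsker–Varadhan inequality bounds `∫ f(D,·) dρ − KL(ρ‖Q D)` by
`log ∫ exp (f D w) Q(D)(dw)` for all `ρ` at once: the difference of the two sides is
`KL(ρ‖ν) ≥ 0`, where `ν` is `Q D` tilted by `exp (f D ·)`. The right-hand side does not depend on
`ρ`, so the only random event to control is that `∫ exp (f D w) Q(D)(dw)` exceeds `ξ / δ`, which
by Markov's inequality has probability at most `δ`.
-/

section ChangeOfMeasure

variable {α : Type*} [MeasurableSpace α] {μ ρ : Measure α}

-- With `≤` in place of `<` the set would be everything when `∫⁻ y, g y ∂μ = 0`.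
lemma measure_lintegral_div_lt_le {g : α → ENNReal} (hg : AEMeasurable g μ) (δ : ENNReal) :
    μ {x | (∫⁻ y, g y ∂μ) / δ < g x} ≤ δ := by
  rcases eq_or_ne (∫⁻ y, g y ∂μ) 0 with h_zero | h_zero
  · have hg_zero : ∀ᵐ x ∂μ, ¬ 0 < g x := by
      filter_upwards [(lintegral_eq_zero_iff' hg).1 h_zero] with x hx
      exact hx.not_gt
    have h_null : μ {x | 0 < g x} = 0 := by simpa only [ae_iff, not_not] using hg_zero
    rw [h_zero, ENNReal.zero_div, h_null]
    exact zero_le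
  rcases eq_or_ne δ ⊤ with rfl | hδ
  · exact le_top
  rcases eq_or_ne ((∫⁻ y, g y ∂μ) / δ) ⊤ with h_top | h_top
  · simp [h_top]
  have h_fin : ∫⁻ y, g y ∂μ ≠ ⊤ := fun h => h_top (h ▸ ENNReal.top_div_of_ne_top hδ)
  calc μ {x | (∫⁻ y, g y ∂μ) / δ < g x}
      ≤ μ {x | (∫⁻ y, g y ∂μ) / δ ≤ g x} := measure_mono fun _ => le_of_lt (α := ENNReal)
    _ ≤ (∫⁻ y, g y ∂μ) / ((∫⁻ y, g y ∂μ) / δ) :=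
        meas_ge_le_lintegral_div hg (ENNReal.div_ne_zero.2 ⟨h_zero, hδ⟩) h_top
    _ = δ := ENNReal.div_div_cancel h_zero h_fin

lemma one_sub_le_measure_le_lintegral_div [IsProbabilityMeasure μ] {g : α → ENNReal}
    (hg : AEMeasurable g μ) (δ : ENNReal) :
    1 - δ ≤ μ {x | g x ≤ (∫⁻ y, g y ∂μ) / δ} := by
  rw [tsub_le_iff_right, ← measure_univ (μ := μ)]
  refine (measure_univ_le_add_compl _).trans (add_le_add_right ?_ _)
  simpa only [Set.compl_ofPred, not_le] using measure_lintegral_div_lt_le hg δ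

lemma sigmaFinite_of_lintegral_ne_top {g : α → ENNReal} (hg : AEMeasurable g μ)
    (hg_ne_zero : ∀ᵐ x ∂μ, g x ≠ 0) (hg_int : ∫⁻ x, g x ∂μ ≠ ⊤) : SigmaFinite μ := by
  have hg_ne_top : ∀ᵐ x ∂μ, g x ≠ ⊤ := (ae_lt_top' hg hg_int).mono fun _ => LT.lt.ne
  have : IsFiniteMeasure (μ.withDensity g) := isFiniteMeasure_withDensity hg_int
  rw [← withDensity_inv_same₀ hg hg_ne_zero hg_ne_top]
  exact SigmaFinite.withDensity_of_ne_top <| (withDensity_absolutelyContinuous μ g).ae_le <|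
    hg_ne_zero.mono fun _ => ENNReal.inv_ne_top.2

lemma neZero_of_absolutelyContinuous [NeZero ρ] (hρμ : ρ ≪ μ) : NeZero μ where
  out h_zero := NeZero.ne ρ (Measure.absolutelyContinuous_zero_iff.1 (h_zero ▸ hρμ))

lemma integral_sub_integral_llr_le_log_integral_exp [IsProbabilityMeasure ρ] {f : α → ℝ}
    (hρμ : ρ ≪ μ) (hf : Integrable f ρ) (h_llr : Integrable (llr ρ μ) ρ)
    (h_exp : Integrable (fun x => Real.exp (f x)) μ) :
    ∫ x, f x ∂ρ - ∫ x, llr ρ μ x ∂ρ ≤ Real.log (∫ x, Real.exp (f x) ∂μ) := by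
  have : SigmaFinite μ := sigmaFinite_of_lintegral_ne_top h_exp.1.enorm (by simp) h_exp.2.ne
  have : NeZero μ := neZero_of_absolutelyContinuous hρμ
  have : IsProbabilityMeasure (μ.tilted f) := isProbabilityMeasure_tilted h_exp
  have h_gibbs : 0 ≤ ∫ x, llr ρ (μ.tilted f) x ∂ρ := by
    simpa using InformationTheory.integral_llr_add_sub_measure_univ_nonneg
      (hρμ.trans (absolutelyContinuous_tilted h_exp))
      (integrable_llr_tilted_right hρμ hf h_llr h_exp)
  rw [integral_llr_tilted_right hρμ hf h_exp h_llr] at h_gibbs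
  linarith

lemma integral_sub_integral_llr_le_log_of_lintegral_exp_le [IsProbabilityMeasure ρ] {f : α → ℝ}
    {c : ℝ} (hρμ : ρ ≪ μ) (hfμ : AEMeasurable f μ) (hfρ : Integrable f ρ)
    (h_llr : Integrable (llr ρ μ) ρ)
    (h_le : ∫⁻ x, ENNReal.ofReal (Real.exp (f x)) ∂μ ≤ ENNReal.ofReal c) :
    ∫ x, f x ∂ρ - ∫ x, llr ρ μ x ∂ρ ≤ Real.log c := by
  have h_nonneg : 0 ≤ᵐ[μ] fun x => Real.exp (f x) := ae_of_all _ fun x => (Real.exp_pos (f x)).le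
  have h_exp : Integrable (fun x => Real.exp (f x)) μ :=
    ⟨hfμ.exp.aestronglyMeasurable, (hasFiniteIntegral_iff_ofReal h_nonneg).2
      (h_le.trans_lt ENNReal.ofReal_lt_top)⟩
  have : NeZero μ := neZero_of_absolutelyContinuous hρμ
  have h_pos : 0 < ∫ x, Real.exp (f x) ∂μ := integral_exp_pos h_exp
  rw [← ofReal_integral_eq_lintegral_ofReal h_exp h_nonneg,
    ENNReal.ofReal_le_ofReal_iff'] at h_le
  exact (integral_sub_integral_llr_le_log_integral_exp hρμ hfρ h_llr h_exp).trans
    (Real.log_le_log h_pos (h_le.resolve_right h_pos.not_ge))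

end ChangeOfMeasure

theorem pac_bayes_change_of_measure_uniform_general
    {Ω W : Type*} [MeasurableSpace Ω] [MeasurableSpace W]
    (P : Measure Ω) [IsProbabilityMeasure P] (Q : Kernel Ω W) [IsSFiniteKernel Q]
    (f : Ω → W → ℝ) (hf : Measurable (Function.uncurry f)) (ξ : ℝ)
    (hξ : ∫⁻ D, ∫⁻ w, ENNReal.ofReal (Real.exp (f D w)) ∂(Q D) ∂P ≤ ENNReal.ofReal ξ)
    (δ : ℝ) (hδ : 0 < δ) :
    ENNReal.ofReal (1 - δ) ≤
      P {D | ∀ ρ : Measure W, IsProbabilityMeasure ρ →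
        ρ ≪ Q D →
        Integrable (fun w => f D w) ρ →
        Integrable (llr ρ (Q D)) ρ →
        (∫ w, f D w ∂ρ) - (∫ w, llr ρ (Q D) w ∂ρ) ≤ Real.log (ξ / δ)} := by
  have h_meas : Measurable fun D => ∫⁻ w, ENNReal.ofReal (Real.exp (f D w)) ∂(Q D) :=
    Measurable.lintegral_kernel_prod_right hf.exp.ennreal_ofReal
  rw [ENNReal.ofReal_sub _ hδ.le, ENNReal.ofReal_one]
  refine (one_sub_le_measure_le_lintegral_div h_meas.aemeasurable _).trans (measure_mono ?_)
  intro D hD ρ _ hρQ hfρ h_llr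
  have h_le : ∫⁻ w, ENNReal.ofReal (Real.exp (f D w)) ∂(Q D) ≤ ENNReal.ofReal (ξ / δ) := by
    rw [ENNReal.ofReal_div_of_pos hδ]
    exact hD.trans (ENNReal.div_le_div_right hξ _)
  exact integral_sub_integral_llr_le_log_of_lintegral_exp_le hρQ
    hf.of_uncurry_left.aemeasurable hfρ h_llr h_le

/-- Uniform high-probability change-of-measure inequality (proof of Lemma 3.1,
before the final Jensen step).  `Q` is a Markov kernel from `Z^n` to `W` (the
data-dependent prior), `f` is measurable, and
`ξ = ∫∫ exp (f D w) Q(D)(dw) (P_Z^{⊗n})(dD)` is assumed finite (encoded by `hξ`).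
With probability at least `1 − δ` over `D ~ P_Z^{⊗n}`, simultaneously for every
probability measure `ρ ≪ Q D` with `f (D, ·)` `ρ`-integrable and finite KL
divergence `KL(ρ‖Q D) = ∫ llr ρ (Q D) dρ`, we have
`∫ f(D,·) dρ − KL(ρ‖Q D) ≤ log (ξ/δ)`. -/
theorem pac_bayes_change_of_measure_uniform
    {Z W : Type*} [MeasurableSpace Z] [MeasurableSpace W]
    (PZ : Measure Z) [IsProbabilityMeasure PZ]
    (n : ℕ) (hn : 1 ≤ n)
    (Q : ProbabilityTheory.Kernel (Fin n → Z) W) [ProbabilityTheory.IsMarkovKernel Q]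
    (f : (Fin n → Z) → W → ℝ)
    (hf : Measurable (fun p : (Fin n → Z) × W => f p.1 p.2))
    (ξ : ℝ)
    (hξ : ENNReal.ofReal ξ =
      ∫⁻ D, ∫⁻ w, ENNReal.ofReal (Real.exp (f D w)) ∂(Q D)
        ∂(Measure.pi fun _ : Fin n => PZ))
    (δ : ℝ) (hδ0 : 0 < δ) (hδ1 : δ < 1) :
    ENNReal.ofReal (1 - δ) ≤
      (Measure.pi fun _ : Fin n => PZ)
        {D | ∀ ρ : Measure W, IsProbabilityMeasure ρ →
          ρ ≪ Q D →
          Integrable (fun w => f D w) ρ →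
          Integrable (llr ρ (Q D)) ρ →
          (∫ w, f D w ∂ρ) - (∫ w, llr ρ (Q D) w ∂ρ) ≤ Real.log (ξ / δ)} :=
  pac_bayes_change_of_measure_uniform_general _ Q f hf ξ hξ.ge δ hδ0
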